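/- arXiv:2307.02501 — 2 statements merged into one kernel-verified Lean document; each statement's English description precedes it below -/
import Mathlib

section
/- Finite-Minkowski-dimension bound on the algorithm-dependent Rademacher complexity: Suppose ℓ(θ,z) is L-Lipschitz in θ for every z and takes values in an interval of length b, and n > 2. Let Θ̂ⁿ ⊂ ℝ^k be finite, and let F ⊇ Θ̂ⁿ be any finite non-focal set in ℝ^k with |F| > 2. Then Rad(Θ̂ⁿ, S⁺) ≤ L·∇(F) + b·√( (2·dim_fM(F)/n) · log(Δ(F)/∇(F)) ), where dim_fM(F) = log T(F) / log(Δ(F)/∇(F)). -/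
open MeasureTheory Real

/-- Empirical Rademacher complexity of the set `C` on the sample `S` (`true ↔ +1`). -/
noncomputable def rad {X Z : Type*} (ℓ : X → Z → ℝ) {n : ℕ} (C : Set X) (S : Fin n → Z) : ℝ :=
  (n : ℝ)⁻¹ * ((2 ^ n : ℝ)⁻¹ *
    ∑ σ : Fin n → Bool, sSup ((fun θ => ∑ i, (if σ i then (1 : ℝ) else -1) * ℓ θ (S i)) '' C))

/-- Nearest-neighbour distance `ν_C(a) = min {d(a,b) : b ∈ C, b ≠ a}`. -/
noncomputable def nnDist {X : Type*} [PseudoMetricSpace X] (C : Finset X) (a : X) : ℝ :=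
  sInf ((fun b => dist a b) '' {b | b ∈ C ∧ b ≠ a})

/-- Covering diameter `∇(C) = max_{a ∈ C} ν_C(a)`. -/
noncomputable def covDiam {X : Type*} [PseudoMetricSpace X] (C : Finset X) : ℝ :=
  sSup (nnDist C '' (C : Set X))

/-- `T(C)`: minimal cardinality of a 2-cover of `C` (a family of subsets of `C`, each with at
least two elements, covering `C`) all of whose members have diameter at most `∇(C)`. -/
noncomputable def Tnum {X : Type*} [PseudoMetricSpace X] (C : Finset X) : ℕ :=
  sInf {m : ℕ | ∃ U : Finset (Finset X), U.card = m ∧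
    (∀ u ∈ U, u ⊆ C ∧ 2 ≤ u.card ∧ Metric.diam (u : Set X) ≤ covDiam C) ∧
    ∀ a ∈ C, ∃ u ∈ U, a ∈ u}

/-- Finite Minkowski dimension `dim_fM(C) = log T(C) / log(Δ(C)/∇(C))`. -/
noncomputable def dimfM {X : Type*} [PseudoMetricSpace X] (C : Finset X) : ℝ :=
  Real.log (Tnum C) / Real.log (Metric.diam (C : Set X) / covDiam C)

lemma aux_opt (x A B : ℝ) (hB : 0 ≤ B) (hA : 0 ≤ A)
    (h : ∀ t : ℝ, 0 < t → t * x ≤ A + t ^ 2 * B ^ 2 / 2) : x ≤ B * Real.sqrt (2 * A) := by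
  by_contra hx
  push Not at hx
  have hs := Real.sqrt_nonneg (2 * A)
  have hx0 : 0 < x := lt_of_le_of_lt (mul_nonneg hB hs) hx
  rcases hB.eq_or_lt with h0 | h0
  · subst h0
    have h1 := h ((A + 1) / x) (by positivity)
    rw [div_mul_cancel₀ _ hx0.ne'] at h1
    norm_num at h1
  · have h1 := h (x / B ^ 2) (by positivity)
    have e1 : x / B ^ 2 * x = x ^ 2 / B ^ 2 := by ring
    have e2 : (x / B ^ 2) ^ 2 * B ^ 2 / 2 = x ^ 2 / B ^ 2 / 2 := by field_simp
    rw [e1, e2] at h1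
    have h2 : x ^ 2 / B ^ 2 ≤ 2 * A := by linarith
    rw [div_le_iff₀ (by positivity)] at h2
    have h3 : (B * Real.sqrt (2 * A)) ^ 2 < x ^ 2 :=
      pow_lt_pow_left₀ hx (mul_nonneg hB hs) (by norm_num)
    rw [mul_pow, Real.sq_sqrt (by linarith)] at h3
    linarith

/-- The sign attached to a Boolean. -/
noncomputable def sgnB (s : Bool) : ℝ := if s then (1 : ℝ) else -1

lemma sgnB_abs (s : Bool) : |sgnB s| = 1 := by
  cases s <;> simp [sgnB]

lemma sum_sgn (n : ℕ) : ∑ σ : Fin n → Bool, ∑ i, sgnB (σ i) = 0 := by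
  have h : ∑ σ : Fin n → Bool, ∑ i, sgnB (σ i) = ∑ σ : Fin n → Bool, ∑ i, sgnB (!(σ i)) := by
    refine Fintype.sum_equiv (Equiv.arrowCongr (Equiv.refl _) Equiv.boolNot) _ _ ?_
    intro σ
    simp
  have h2 : ∀ s, sgnB (!s) = - sgnB s := by intro s; cases s <;> simp [sgnB]
  simp only [h2, Finset.sum_neg_distrib] at h
  linarith

lemma mgf_bound (n : ℕ) (v : Fin n → ℝ) (b t : ℝ) (hv : ∀ i, |v i| ≤ b) :
    ∑ σ : Fin n → Bool, Real.exp (t * ∑ i, sgnB (σ i) * v i)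
      ≤ 2 ^ n * Real.exp (t ^ 2 * (n * b ^ 2) / 2) := by
  have h1 : ∑ σ : Fin n → Bool, Real.exp (t * ∑ i, sgnB (σ i) * v i)
      = ∏ i, ∑ s : Bool, Real.exp (t * (sgnB s * v i)) := by
    rw [Finset.prod_univ_sum, Fintype.piFinset_univ]
    refine Finset.sum_congr rfl fun σ _ => ?_
    rw [Finset.mul_sum, Real.exp_sum]
  rw [h1]
  have h2 : ∀ i, ∑ s : Bool, Real.exp (t * (sgnB s * v i)) ≤ 2 * Real.exp (t ^ 2 * b ^ 2 / 2) := by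
    intro i
    have e : ∑ s : Bool, Real.exp (t * (sgnB s * v i)) = 2 * Real.cosh (t * v i) := by
      rw [Real.cosh_eq]
      simp [sgnB]
      ring
    rw [e]
    have h3 : v i ^ 2 ≤ b ^ 2 := sq_le_sq' (by linarith [(abs_le.1 (hv i)).1]) (abs_le.1 (hv i)).2
    have h4 : (t * v i) ^ 2 / 2 ≤ t ^ 2 * b ^ 2 / 2 := by
      rw [mul_pow]
      gcongr
    have := (Real.cosh_le_exp_half_sq (t * v i)).trans (Real.exp_le_exp.2 h4)
    linarith
  calc _ ≤ ∏ i : Fin n, 2 * Real.exp (t ^ 2 * b ^ 2 / 2) :=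
        Finset.prod_le_prod (fun i _ => Finset.sum_nonneg fun s _ => (Real.exp_pos _).le)
          (fun i _ => h2 i)
    _ = _ := by
        rw [Finset.prod_const, Finset.card_univ, Fintype.card_fin, mul_pow, ← Real.exp_nat_mul]
        congr 2
        ring

lemma nnDist_attained {X : Type*} [MetricSpace X] (F : Finset X) (hF : 2 < F.card)
    (x : X) : ∃ y ∈ F, y ≠ x ∧ dist x y = nnDist F x := by
  have hfin : ({b | b ∈ F ∧ b ≠ x} : Set X).Finite :=
    F.finite_toSet.subset fun y hy => hy.1
  have hne : ({b | b ∈ F ∧ b ≠ x} : Set X).Nonempty := by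
    obtain ⟨y, hy, hyx⟩ := Finset.exists_mem_ne (by omega : 1 < F.card) x
    exact ⟨y, hy, hyx⟩
  obtain ⟨y, hy, h⟩ := (hne.image (fun b => dist x b)).csInf_mem (hfin.image _)
  exact ⟨y, hy.1, hy.2, h⟩

lemma nnDist_le_covDiam {X : Type*} [MetricSpace X] (F : Finset X) (x : X) (hx : x ∈ F) :
    nnDist F x ≤ covDiam F :=
  le_csSup (F.finite_toSet.image _).bddAbove ⟨x, hx, rfl⟩

lemma covDiam_pos {X : Type*} [MetricSpace X] (F : Finset X) (hF : 2 < F.card) :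
    0 < covDiam F := by
  obtain ⟨x, hx⟩ := Finset.card_pos.1 (by omega : 0 < F.card)
  obtain ⟨y, _, hyx, h⟩ := nnDist_attained F hF x
  have := nnDist_le_covDiam F x hx
  have := dist_pos.2 hyx.symm
  linarith

lemma exists_cover {X : Type*} [MetricSpace X] (F : Finset X) (hF : 2 < F.card) :
    ∃ U : Finset (Finset X), U.card = Tnum F ∧
    (∀ u ∈ U, u ⊆ F ∧ 2 ≤ u.card ∧ Metric.diam (u : Set X) ≤ covDiam F) ∧
    ∀ a ∈ F, ∃ u ∈ U, a ∈ u := by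
  classical
  have hne : ({m : ℕ | ∃ U : Finset (Finset X), U.card = m ∧
    (∀ u ∈ U, u ⊆ F ∧ 2 ≤ u.card ∧ Metric.diam (u : Set X) ≤ covDiam F) ∧
    ∀ a ∈ F, ∃ u ∈ U, a ∈ u}).Nonempty := by
    choose f hf1 hf2 hf3 using nnDist_attained F hF
    refine ⟨_, F.image (fun x => {x, f x}), rfl, ?_, ?_⟩
    · intro u hu
      obtain ⟨x, hx, rfl⟩ := Finset.mem_image.1 hu
      refine ⟨?_, ?_, ?_⟩
      · intro y hy
        simp only [Finset.mem_insert, Finset.mem_singleton] at hy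
        rcases hy with rfl | rfl
        · exact hx
        · exact hf1 _
      · rw [Finset.card_pair (hf2 x).symm]
      · rw [Finset.coe_pair, Metric.diam_pair, hf3]
        exact nnDist_le_covDiam F x hx
    · intro x hx
      exact ⟨{x, f x}, Finset.mem_image.2 ⟨x, hx, rfl⟩, by simp⟩
  exact Nat.sInf_mem hne

/-- finite-Minkowski-dimension bound on the ARC.
If `ℓ` is `L`-Lipschitz in `θ` (w.r.t. the `ℓ∞` metric on `ℝᵏ`) and takes values in an
interval of length `b`, `n > 2`, `Θ̂ⁿ ⊂ ℝᵏ` is finite, and `F ⊇ Θ̂ⁿ` is a finite non-focal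
set with `|F| > 2`, then
`Rad(Θ̂ⁿ, S⁺) ≤ L ∇(F) + b √((2 dim_fM(F)/n) log(Δ(F)/∇(F)))`. -/
theorem stmt_3 {Z : Type*} (k n : ℕ) (hn : 2 < n)
    (ℓ : (Fin k → ℝ) → Z → ℝ) (L a b : ℝ) (hL : 0 ≤ L)
    (hLip : ∀ z θ θ', |ℓ θ z - ℓ θ' z| ≤ L * dist θ θ')
    (hrange : ∀ θ z, ℓ θ z ∈ Set.Icc a (a + b))
    (C F : Finset (Fin k → ℝ)) (hCne : C.Nonempty) (hCF : C ⊆ F)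
    (hFcard : 2 < F.card) (hFnonfocal : covDiam F < Metric.diam (F : Set (Fin k → ℝ)))
    (S : Fin n → Z) :
    rad ℓ (C : Set (Fin k → ℝ)) S ≤
      L * covDiam F +
        b * Real.sqrt ((2 * dimfM F / n) *
          Real.log (Metric.diam (F : Set (Fin k → ℝ)) / covDiam F)) := by
  obtain ⟨U, hUc, hU, hcov⟩ := exists_cover F hFcard
  have hcd := covDiam_pos F hFcard
  have hlog : 0 < Real.log (Metric.diam (F : Set (Fin k → ℝ)) / covDiam F) :=
    Real.log_pos ((one_lt_div hcd).2 hFnonfocal)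
  have hn0 : (0 : ℝ) < n := by exact_mod_cast (by omega : 0 < n)
  have hdim : (2 * dimfM F / n) * Real.log (Metric.diam (F : Set (Fin k → ℝ)) / covDiam F)
      = 2 * Real.log (Tnum F) / n := by
    unfold dimfM
    field_simp
  rw [hdim]
  obtain ⟨θ₀, hθ₀⟩ := hCne
  have hTpos : 0 < Tnum F := by
    rw [← hUc, Finset.card_pos]
    obtain ⟨u, hu, _⟩ := hcov θ₀ (hCF hθ₀)
    exact ⟨u, hu⟩
  have hT1 : (1 : ℝ) ≤ Tnum F := by exact_mod_cast hTpos
  have hb : 0 ≤ b := by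
    have := hrange θ₀ (S ⟨0, by omega⟩)
    linarith [this.1, this.2]
  have hpick : ∀ u : Finset (Fin k → ℝ), ∃ p, u ∈ U → p ∈ u := by
    intro u
    by_cases hu : u ∈ U
    · obtain ⟨p, hp⟩ := Finset.card_pos.1 (by have := (hU u hu).2.1; omega : 0 < u.card)
      exact ⟨p, fun _ => hp⟩
    · exact ⟨θ₀, fun h => absurd h hu⟩
  choose p hp using hpick
  set E : ℝ := (2 ^ n : ℝ)⁻¹ * ∑ σ : Fin n → Bool,
    sSup ((fun θ => ∑ i, (if σ i then (1 : ℝ) else -1) * ℓ θ (S i)) '' (C : Set (Fin k → ℝ)))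
    with hE
  have key : ∀ t : ℝ, 0 < t →
      t * (E - n * (L * covDiam F)) ≤ Real.log (Tnum F) + t ^ 2 * (Real.sqrt n * b) ^ 2 / 2 := by
    intro t ht
    have hsq : (Real.sqrt n * b) ^ 2 = n * b ^ 2 := by
      rw [mul_pow, Real.sq_sqrt hn0.le]
    rw [hsq]
    set c : ℝ := Real.log (Tnum F) + t ^ 2 * (n * b ^ 2) / 2 with hc
    have hpt : ∀ σ : Fin n → Bool,
        t * sSup ((fun θ => ∑ i, (if σ i then (1 : ℝ) else -1) * ℓ θ (S i)) ''
          (C : Set (Fin k → ℝ))) ≤ (t * (n * (L * covDiam F)) + c - 1) + t * a * ∑ i, sgnB (σ i)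
          + Real.exp (-c) * ∑ u ∈ U, Real.exp (t * ∑ i, sgnB (σ i) * (ℓ (p u) (S i) - a)) := by
      intro σ
      rw [mul_comm t, ← le_div_iff₀ ht]
      refine csSup_le (Set.Nonempty.image _ ⟨θ₀, hθ₀⟩) ?_
      rintro _ ⟨θ, hθ, rfl⟩
      rw [le_div_iff₀ ht, mul_comm]
      obtain ⟨u, hu, hθu⟩ := hcov θ (hCF hθ)
      have hdist : dist θ (p u) ≤ covDiam F :=
        (Metric.dist_le_diam_of_mem u.finite_toSet.isBounded (by exact_mod_cast hθu)
          (by exact_mod_cast hp u hu)).trans (hU u hu).2.2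
      have h1 : ∑ i, sgnB (σ i) * ℓ θ (S i) ≤ ∑ i, (sgnB (σ i) * (ℓ (p u) (S i) - a)
          + a * sgnB (σ i) + L * covDiam F) := by
        refine Finset.sum_le_sum fun i _ => ?_
        have h2 : sgnB (σ i) * (ℓ θ (S i) - ℓ (p u) (S i)) ≤ L * covDiam F := by
          refine (le_abs_self _).trans ?_
          rw [abs_mul, sgnB_abs, one_mul]
          exact (hLip _ _ _).trans (mul_le_mul_of_nonneg_left hdist hL)
        nlinarith
      rw [Finset.sum_add_distrib, Finset.sum_add_distrib, ← Finset.mul_sum, Finset.sum_const,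
        Finset.card_univ, Fintype.card_fin, nsmul_eq_mul] at h1
      have h3 : Real.exp (t * ∑ i, sgnB (σ i) * (ℓ (p u) (S i) - a)) ≤
          ∑ u ∈ U, Real.exp (t * ∑ i, sgnB (σ i) * (ℓ (p u) (S i) - a)) :=
        Finset.single_le_sum
          (f := fun u => Real.exp (t * ∑ i, sgnB (σ i) * (ℓ (p u) (S i) - a)))
          (fun _ _ => (Real.exp_pos _).le) hu
      have h4 := mul_le_mul_of_nonneg_left h3 (Real.exp_pos (-c)).le
      rw [← Real.exp_add] at h4
      have h5 := Real.add_one_le_exp (-c + t * ∑ i, sgnB (σ i) * (ℓ (p u) (S i) - a))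
      have h6 := mul_le_mul_of_nonneg_left h1 ht.le
      change t * ∑ i, sgnB (σ i) * ℓ θ (S i) ≤ _
      linarith
    have hsum := Finset.sum_le_sum fun σ (_ : σ ∈ (Finset.univ : Finset (Fin n → Bool))) => hpt σ
    rw [← Finset.mul_sum, Finset.sum_add_distrib, Finset.sum_add_distrib, ← Finset.mul_sum,
      ← Finset.mul_sum, sum_sgn, Finset.sum_const, Finset.card_univ, Finset.sum_comm] at hsum
    have hU2 : ∑ u ∈ U, ∑ σ : Fin n → Bool,
        Real.exp (t * ∑ i, sgnB (σ i) * (ℓ (p u) (S i) - a))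
        ≤ ∑ u ∈ U, (2 ^ n * Real.exp (t ^ 2 * (n * b ^ 2) / 2)) := by
      refine Finset.sum_le_sum fun u _ => mgf_bound n _ b t fun i => ?_
      have := hrange (p u) (S i)
      rw [abs_le]
      constructor <;> linarith [this.1, this.2]
    rw [Finset.sum_const, hUc, nsmul_eq_mul] at hU2
    have hexp : Real.exp (-c) * (Tnum F * (2 ^ n * Real.exp (t ^ 2 * (n * b ^ 2) / 2)))
        = 2 ^ n := by
      have : (Tnum F : ℝ) = Real.exp (Real.log (Tnum F)) := (Real.exp_log (by linarith)).symm
      rw [this]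
      have h7 : Real.exp (-c) * (Real.exp (Real.log (Tnum F)) *
          Real.exp (t ^ 2 * (n * b ^ 2) / 2)) = 1 := by
        rw [← Real.exp_add, ← Real.exp_add, hc, neg_add_cancel, Real.exp_zero]
      linear_combination (2 ^ n : ℝ) * h7
    have hU3 := mul_le_mul_of_nonneg_left hU2 (Real.exp_pos (-c)).le
    rw [hexp] at hU3
    have hcard : (Fintype.card (Fin n → Bool)) = 2 ^ n := by simp
    rw [hcard, nsmul_eq_mul] at hsum
    push_cast at hsum
    have h2n : (0 : ℝ) < 2 ^ n := by positivity
    have hEe : 2 ^ n * E = ∑ σ : Fin n → Bool, sSup ((fun θ => ∑ i,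
        (if σ i then (1 : ℝ) else -1) * ℓ θ (S i)) '' (C : Set (Fin k → ℝ))) := by
      rw [hE, mul_inv_cancel_left₀ h2n.ne']
    rw [← hEe] at hsum
    refine le_of_mul_le_mul_left ?_ h2n
    linarith
  have hfin := aux_opt _ _ _ (mul_nonneg (Real.sqrt_nonneg _) hb) (Real.log_nonneg hT1) key
  have hrad : rad ℓ (C : Set (Fin k → ℝ)) S = (n : ℝ)⁻¹ * E := rfl
  rw [hrad, inv_mul_le_iff₀ hn0, Real.sqrt_div (by have := Real.log_nonneg hT1; positivity)]
  have hs : Real.sqrt n * Real.sqrt n = n := Real.mul_self_sqrt hn0.le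
  have hs0 : 0 < Real.sqrt n := Real.sqrt_pos.2 hn0
  have he : (n : ℝ) * (b * (Real.sqrt (2 * Real.log (Tnum F)) / Real.sqrt n))
      = Real.sqrt n * b * Real.sqrt (2 * Real.log (Tnum F)) := by
    rw [← mul_div_assoc, ← mul_div_assoc, div_eq_iff hs0.ne']
    linear_combination (-(b * Real.sqrt (2 * Real.log (Tnum F)))) * hs
  rw [mul_add, he]
  linarith
end

section
/- Two-sided symmetrized maximum is bounded by the sum of two Rademacher complexities: Let S⁻ = (Z₁^{−1},…,Zₙ^{−1}) and S⁺ = (Z₁^{+1},…,Zₙ^{+1}) be two size-n samples, let Θ̂ ⊆ Θ be any finite set, and for σ ∈ {−1,+1}ⁿ let R̂_σ(θ) = (1/n)∑_{i=1}^n ℓ(θ, Z_i^{σᵢ}). Then E_σ[ max_{θ ∈ Θ̂} ( R̂_{−σ}(θ) − R̂_σ(θ) ) ] ≤ Rad(Θ̂, S⁻) + Rad(Θ̂, S⁺), where σ is uniform on {−1,+1}ⁿ and −σ = (−σ₁,…,−σₙ). -/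
open MeasureTheory Real

noncomputable def empRisk {X Z : Type*} (ℓ : X → Z → ℝ) {n : ℕ} (θ : X) (S : Fin n → Z) : ℝ :=
  (n : ℝ)⁻¹ * ∑ i, ℓ θ (S i)

/-- The mixed sample `S_σ` (`true ↔ +1`, i.e. the `i`-th point comes from `Sp` iff `σ i`). -/
def mix {Z : Type*} {n : ℕ} (Sm Sp : Fin n → Z) (σ : Fin n → Bool) : Fin n → Z :=
  fun i => if σ i then Sp i else Sm i

/-- two-sided symmetrized maximum is bounded by two Rademacher complexities.
For any finite nonempty `Θ̂ ⊆ Θ`, writing `R̂_σ(θ)` for the empirical risk on the mixed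
sample `S_σ`, `E_σ[max_{θ ∈ Θ̂}(R̂_{−σ}(θ) − R̂_σ(θ))] ≤ Rad(Θ̂, S⁻) + Rad(Θ̂, S⁺)`. -/
theorem stmt_15 {Θ Z : Type*} (n : ℕ) (hn : 0 < n)
    (ℓ : Θ → Z → ℝ) (Sm Sp : Fin n → Z)
    (C : Set Θ) (hCfin : C.Finite) (hCne : C.Nonempty) :
    (2 ^ n : ℝ)⁻¹ *
        ∑ σ : Fin n → Bool,
          sSup ((fun θ =>
            empRisk ℓ θ (mix Sm Sp fun i => !σ i) - empRisk ℓ θ (mix Sm Sp σ)) '' C) ≤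
      rad ℓ C Sm + rad ℓ C Sp := by
  classical
  set F : (Fin n → Z) → (Fin n → Bool) → Θ → ℝ :=
    fun S σ θ => ∑ i, (if σ i then (1 : ℝ) else -1) * ℓ θ (S i) with hF
  have hbdd : ∀ S σ, BddAbove (F S σ '' C) := fun S σ => (hCfin.image _).bddAbove
  have key : ∀ σ : Fin n → Bool,
      sSup ((fun θ =>
        empRisk ℓ θ (mix Sm Sp fun i => !σ i) - empRisk ℓ θ (mix Sm Sp σ)) '' C) ≤
      (n : ℝ)⁻¹ * (sSup (F Sm σ '' C) + sSup (F Sp (fun i => !σ i) '' C)) := by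
    intro σ
    apply csSup_le (hCne.image _)
    rintro _ ⟨θ, hθ, rfl⟩
    have h1 : F Sm σ θ ≤ sSup (F Sm σ '' C) := le_csSup (hbdd _ _) ⟨θ, hθ, rfl⟩
    have h2 : F Sp (fun i => !σ i) θ ≤ sSup (F Sp (fun i => !σ i) '' C) :=
      le_csSup (hbdd _ _) ⟨θ, hθ, rfl⟩
    have h3 : empRisk ℓ θ (mix Sm Sp fun i => !σ i) - empRisk ℓ θ (mix Sm Sp σ)
        = (n : ℝ)⁻¹ * (F Sm σ θ + F Sp (fun i => !σ i) θ) := by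
      simp only [empRisk, hF, ← mul_sub, ← Finset.sum_sub_distrib, ← Finset.sum_add_distrib]
      congr 1
      apply Finset.sum_congr rfl
      intro i _
      by_cases h : σ i = true
      · simp [mix, h]; ring
      · simp [mix, h]; ring
    simp only [h3]
    have hn' : (0 : ℝ) ≤ (n : ℝ)⁻¹ := by positivity
    exact mul_le_mul_of_nonneg_left (add_le_add h1 h2) hn'
  have hflip : ∑ σ : Fin n → Bool, sSup (F Sp (fun i => !σ i) '' C)
      = ∑ σ : Fin n → Bool, sSup (F Sp σ '' C) := by
    have hinv : Function.Involutive (fun (σ : Fin n → Bool) i => !σ i) := by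
      intro σ; funext i; simp
    exact Equiv.sum_comp hinv.toPerm (fun σ => sSup (F Sp σ '' C))
  have hsum := Finset.sum_le_sum (fun σ (_ : σ ∈ (Finset.univ : Finset (Fin n → Bool))) => key σ)
  rw [← Finset.mul_sum, Finset.sum_add_distrib, hflip] at hsum
  have h2 : (0 : ℝ) ≤ (2 ^ n : ℝ)⁻¹ := by positivity
  refine (mul_le_mul_of_nonneg_left hsum h2).trans (le_of_eq ?_)
  simp only [rad, hF]
  ring
end
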